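/- arXiv:2304.06913 — 4 statements merged into one kernel-verified Lean document; each statement's English description precedes it below -/
import Mathlib

section
/- Let Ω ⊂ ℝ^d be compact, T > 0, and let σ : ℝ → ℝ be any bounded, Borel-measurable sigmoidal function. If μ is a finite signed (regular Borel) measure on Ω × [0,T] such that ∫_{Ω × [0,T]} σ(⟨k^x, x⟩ + b^x) σ(k^t t + b^t) dμ(x,t) = 0 for all k^x ∈ ℝ^d and all k^t, b^x, b^t ∈ ℝ, then μ = 0. In particular, every continuous sigmoidal function is discriminatory in this separated (product) sense. -/
open Filter MeasureTheory

/-- The sharpened sigmoid converges pointwise to the indicator of `[0,∞)`. -/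
lemma sigmoid_sharpen_tendsto (σ : ℝ → ℝ)
    (hσ1 : Tendsto σ atTop (nhds 1)) (hσ0 : Tendsto σ atBot (nhds 0)) (z : ℝ) :
    Tendsto (fun n : ℕ => σ ((n : ℝ) * ((n : ℝ) * z + 1))) atTop
      (nhds ((Set.Ici (0 : ℝ)).indicator (fun _ => (1 : ℝ)) z)) := by
  have hn : Tendsto (fun n : ℕ => (n : ℝ)) atTop atTop := tendsto_natCast_atTop_atTop
  rcases le_or_gt 0 z with hz | hz
  · rw [Set.indicator_of_mem (Set.mem_Ici.2 hz)]
    refine hσ1.comp (tendsto_atTop_mono (fun n => ?_) hn)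
    have h0 : (0 : ℝ) ≤ n := Nat.cast_nonneg n
    nlinarith [mul_nonneg h0 (mul_nonneg h0 hz)]
  · rw [Set.indicator_of_notMem (by simpa using hz)]
    refine hσ0.comp (hn.atTop_mul_atBot₀ ?_)
    exact tendsto_atBot_add_const_right _ _ (hn.atTop_mul_const_of_neg hz)

/-- Dominated convergence: the sharpened product integrals converge to the measure of a product
of half lines. -/
lemma sigmoid_product_tendsto {α : Type*} [MeasurableSpace α] (σ : ℝ → ℝ) (hσm : Measurable σ)
    (hσb : ∃ C, ∀ z, |σ z| ≤ C)
    (hσ1 : Tendsto σ atTop (nhds 1)) (hσ0 : Tendsto σ atBot (nhds 0))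
    (μ : Measure α) [IsFiniteMeasure μ] (f g : α → ℝ) (hf : Measurable f) (hg : Measurable g) :
    Tendsto (fun n : ℕ => ∫ p, σ ((n : ℝ) * ((n : ℝ) * f p + 1)) *
      σ ((n : ℝ) * ((n : ℝ) * g p + 1)) ∂μ) atTop
      (nhds (μ.real (f ⁻¹' Set.Ici 0 ∩ g ⁻¹' Set.Ici 0))) := by
  obtain ⟨C, hC⟩ := hσb
  have hmeas : MeasurableSet (f ⁻¹' Set.Ici 0 ∩ g ⁻¹' Set.Ici 0) :=
    (hf measurableSet_Ici).inter (hg measurableSet_Ici)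
  have h1 : ∫ p, (f ⁻¹' Set.Ici 0 ∩ g ⁻¹' Set.Ici 0).indicator (fun _ => (1 : ℝ)) p ∂μ
      = μ.real (f ⁻¹' Set.Ici 0 ∩ g ⁻¹' Set.Ici 0) := by
    rw [integral_indicator hmeas]; simp
  rw [← h1]
  refine tendsto_integral_of_dominated_convergence (fun _ => C * C) (fun n => ?_)
    (integrable_const _) (fun n => ?_) ?_
  · exact Measurable.aestronglyMeasurable (by fun_prop)
  · refine Eventually.of_forall fun p => ?_
    rw [Real.norm_eq_abs, abs_mul]
    exact mul_le_mul (hC _) (hC _) (abs_nonneg _) ((abs_nonneg _).trans (hC 0))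
  · refine Eventually.of_forall fun p => ?_
    have := (sigmoid_sharpen_tendsto σ hσ1 hσ0 (f p)).mul
      (sigmoid_sharpen_tendsto σ hσ1 hσ0 (g p))
    convert this using 2
    by_cases h1 : 0 ≤ f p <;> by_cases h2 : 0 ≤ g p <;> simp [Set.indicator, h1, h2]

/-- Finite measures on the plane are determined by closed quadrants. -/
lemma ext_of_quadrants (μ ν : Measure (ℝ × ℝ)) [IsFiniteMeasure μ] [IsFiniteMeasure ν]
    (h : ∀ a b, μ (Set.Ici a ×ˢ Set.Ici b) = ν (Set.Ici a ×ˢ Set.Ici b)) : μ = ν := by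
  have key1 : ∀ b (s : Set ℝ), MeasurableSet s → μ (s ×ˢ Set.Ici b) = ν (s ×ˢ Set.Ici b) := by
    intro b s hs
    have he : (μ.restrict (Prod.snd ⁻¹' Set.Ici b)).map Prod.fst
        = (ν.restrict (Prod.snd ⁻¹' Set.Ici b)).map Prod.fst := by
      refine Measure.ext_of_Ici _ _ fun a => ?_
      rw [Measure.map_apply measurable_fst measurableSet_Ici,
        Measure.map_apply measurable_fst measurableSet_Ici,
        Measure.restrict_apply (measurable_fst measurableSet_Ici),
        Measure.restrict_apply (measurable_fst measurableSet_Ici)]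
      exact h a b
    have := congrArg (fun m => m s) he
    rw [Measure.map_apply measurable_fst hs, Measure.map_apply measurable_fst hs,
      Measure.restrict_apply (measurable_fst hs), Measure.restrict_apply (measurable_fst hs)] at this
    exact this
  refine Measure.ext_prod ?_
  intro s t hs ht
  have he : (μ.restrict (Prod.fst ⁻¹' s)).map Prod.snd
      = (ν.restrict (Prod.fst ⁻¹' s)).map Prod.snd := by
    refine Measure.ext_of_Ici _ _ fun b => ?_
    rw [Measure.map_apply measurable_snd measurableSet_Ici,
      Measure.map_apply measurable_snd measurableSet_Ici,
      Measure.restrict_apply (measurable_snd measurableSet_Ici),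
      Measure.restrict_apply (measurable_snd measurableSet_Ici), Set.inter_comm]
    exact key1 b s hs
  have := congrArg (fun m => m t) he
  rw [Measure.map_apply measurable_snd ht, Measure.map_apply measurable_snd ht,
    Measure.restrict_apply (measurable_snd ht), Measure.restrict_apply (measurable_snd ht),
    Set.inter_comm] at this
  exact this



/-- Any bounded, Borel-measurable sigmoidal function is discriminatory in the
separated (product) sense: if all the product integrals of
`σ(⟨kˣ,x⟩ + bˣ) · σ(kᵗ t + bᵗ)` against a finite signed regular Borel measure `μ`
on `Ω × [0,T]` vanish, then `μ = 0`.  The finite signed measure `μ` is represented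
by its Jordan decomposition `μ = μ₁ - μ₂` as a difference of two finite (regular)
measures supported on `Ω ×ˢ [0,T]`, and `μ = 0` means `μ₁ = μ₂`.
In particular (since continuous functions are Borel measurable and a continuous
sigmoidal function is bounded on `ℝ` by its limits), every continuous sigmoidal
function is discriminatory in this sense. -/
theorem sigmoidal_discriminatory_separated {d : ℕ} (Ω : Set (Fin d → ℝ)) (hΩ : IsCompact Ω)
    (T : ℝ) (hT : 0 < T)
    (σ : ℝ → ℝ) (hσm : Measurable σ) (hσb : ∃ C, ∀ z, |σ z| ≤ C)
    (hσ1 : Tendsto σ atTop (nhds 1)) (hσ0 : Tendsto σ atBot (nhds 0))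
    (μ₁ μ₂ : Measure ((Fin d → ℝ) × ℝ)) [IsFiniteMeasure μ₁] [IsFiniteMeasure μ₂]
    [μ₁.Regular] [μ₂.Regular]
    (hs₁ : μ₁ (Ω ×ˢ Set.Icc (0 : ℝ) T)ᶜ = 0) (hs₂ : μ₂ (Ω ×ˢ Set.Icc (0 : ℝ) T)ᶜ = 0)
    (hzero : ∀ (kx : Fin d → ℝ) (kt bx bt : ℝ),
      ∫ p, σ ((∑ i, kx i * p.1 i) + bx) * σ (kt * p.2 + bt) ∂μ₁ =
      ∫ p, σ ((∑ i, kx i * p.1 i) + bx) * σ (kt * p.2 + bt) ∂μ₂) :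
    μ₁ = μ₂ := by
  have hplane : ∀ kx : Fin d → ℝ,
      μ₁.map (fun p => ((∑ i, kx i * p.1 i), p.2)) =
      μ₂.map (fun p => ((∑ i, kx i * p.1 i), p.2)) := by
    intro kx
    have hm : Measurable (fun p : (Fin d → ℝ) × ℝ => ((∑ i, kx i * p.1 i), p.2)) := by fun_prop
    refine ext_of_quadrants _ _ fun a b => ?_
    rw [Measure.map_apply hm (measurableSet_Ici.prod measurableSet_Ici),
      Measure.map_apply hm (measurableSet_Ici.prod measurableSet_Ici)]
    have hf : Measurable (fun p : (Fin d → ℝ) × ℝ => (∑ i, kx i * p.1 i) - a) := by fun_prop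
    have hg : Measurable (fun p : (Fin d → ℝ) × ℝ => p.2 - b) := by fun_prop
    have t1 := sigmoid_product_tendsto σ hσm hσb hσ1 hσ0 μ₁ _ _ hf hg
    have t2 := sigmoid_product_tendsto σ hσm hσb hσ1 hσ0 μ₂ _ _ hf hg
    have hrw : ∀ (n : ℕ) (p : (Fin d → ℝ) × ℝ),
        σ ((n : ℝ) * ((n : ℝ) * ((∑ i, kx i * p.1 i) - a) + 1)) *
          σ ((n : ℝ) * ((n : ℝ) * (p.2 - b) + 1)) =
        σ ((∑ i, ((n : ℝ) * n * kx i) * p.1 i) + (n - (n : ℝ) * n * a)) *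
          σ (((n : ℝ) * n) * p.2 + (n - (n : ℝ) * n * b)) := by
      intro n p
      have : (∑ i, ((n : ℝ) * n * kx i) * p.1 i) = (n : ℝ) * n * ∑ i, kx i * p.1 i := by
        rw [Finset.mul_sum]; exact Finset.sum_congr rfl fun i _ => by ring
      rw [this]
      congr 2 <;> ring
    simp only [hrw] at t1 t2
    simp only [hzero] at t1
    have heq := tendsto_nhds_unique t1 t2
    have hset : (fun p : (Fin d → ℝ) × ℝ => ((∑ i, kx i * p.1 i), p.2)) ⁻¹'
        (Set.Ici a ×ˢ Set.Ici b) =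
        (fun p : (Fin d → ℝ) × ℝ => (∑ i, kx i * p.1 i) - a) ⁻¹' Set.Ici 0 ∩
          (fun p : (Fin d → ℝ) × ℝ => p.2 - b) ⁻¹' Set.Ici 0 := by
      ext p; simp
    rw [hset]
    exact (measureReal_eq_measureReal_iff).1 heq
  refine Measure.ext_of_charFunDual ?_
  ext L
  rw [charFunDual_eq_charFun_map_one, charFunDual_eq_charFun_map_one]
  congr 1
  let kx : Fin d → ℝ := fun i => L (Pi.single i 1, 0)
  have hL : (fun p => L p) = (fun q : ℝ × ℝ => q.1 + q.2 * L (0, 1)) ∘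
      (fun p : (Fin d → ℝ) × ℝ => ((∑ i, kx i * p.1 i), p.2)) := by
    funext p
    have h1 : p = ∑ i, p.1 i • ((Pi.single i 1, 0) : (Fin d → ℝ) × ℝ) + p.2 • (0, 1) := by
      ext j
      · simp [Prod.fst_sum, Finset.sum_apply, Pi.single_apply]
      · simp [Prod.snd_sum]
    conv_lhs => rw [h1]
    simp only [map_add, map_sum, map_smul, smul_eq_mul, Function.comp, kx]
    congr 1
    exact Finset.sum_congr rfl fun i _ => mul_comm _ _
  have hm : Measurable (fun p : (Fin d → ℝ) × ℝ => ((∑ i, kx i * p.1 i), p.2)) := by fun_prop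
  have hq : Measurable (fun q : ℝ × ℝ => q.1 + q.2 * L (0, 1)) := by fun_prop
  change μ₁.map (fun p => L p) = μ₂.map (fun p => L p)
  rw [hL, ← Measure.map_map hq hm, ← Measure.map_map hq hm, hplane kx]
end

section
/- Let Ω ⊂ ℝ^d be a compact set and T > 0, and let σ : ℝ → ℝ be any continuous sigmoidal function. Then the set of finite sums of separated (product) form G(x,t) = Σ_{j=1}^N u_j σ(⟨k_j^x, x⟩ + b_j^x) σ(k_j^t t + b_j^t), with N ∈ ℕ, u_j, k_j^t, b_j^x, b_j^t ∈ ℝ and k_j^x ∈ ℝ^d, is dense in C(Ω × [0,T]) with respect to the supremum norm. -/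
open Filter

/-- One-dimensional approximation by steep sigmoidal staircases. -/
lemma sov_oneD (σ : ℝ → ℝ) (hσc : Continuous σ)
    (hσ1 : Tendsto σ atTop (nhds 1)) (hσ0 : Tendsto σ atBot (nhds 0))
    (g : ℝ → ℝ) (hg : Continuous g) (ε : ℝ) (hε : 0 < ε) :
    ∃ (N : ℕ) (K : ℝ), ∀ s ∈ Set.Icc (0 : ℝ) 1,
      |g 0 + ∑ i ∈ Finset.range N, (g (((i + 1 : ℕ) : ℝ) / N) - g ((i : ℝ) / N)) *
        σ (K * (N * s - (i + 1))) - g s| ≤ ε := by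
  -- a global bound on σ
  obtain ⟨C, hC0, hC⟩ : ∃ C : ℝ, 0 ≤ C ∧ ∀ y, |σ y| ≤ C := by
    obtain ⟨a, ha⟩ := eventually_atTop.1 (hσ1.eventually (Metric.ball_mem_nhds (1 : ℝ) one_pos))
    obtain ⟨b, hb⟩ := eventually_atBot.1 (hσ0.eventually (Metric.ball_mem_nhds (0 : ℝ) one_pos))
    obtain ⟨c, hc⟩ := (isCompact_Icc (a := b) (b := a)).exists_bound_of_continuousOn
      hσc.continuousOn
    refine ⟨max c 2, le_trans (by norm_num) (le_max_right _ _), fun y => ?_⟩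
    rcases le_total a y with h | h
    · have := ha y h
      rw [Real.dist_eq, abs_lt] at this
      refine le_trans ?_ (le_max_right _ _)
      rw [abs_le]; constructor <;> linarith
    rcases le_total y b with h' | h'
    · have := hb y h'
      rw [Real.dist_eq, abs_lt] at this
      refine le_trans ?_ (le_max_right _ _)
      rw [abs_le]; constructor <;> linarith
    · exact le_trans (hc y ⟨h', h⟩) (le_max_left _ _)
  set η : ℝ := ε / (2 * C + 4) with hη
  have hη0 : 0 < η := by positivity
  have huc : UniformContinuousOn g (Set.Icc 0 1) :=
    isCompact_Icc.uniformContinuousOn_of_continuous hg.continuousOn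
  obtain ⟨δ, hδ, hδg⟩ := Metric.uniformContinuousOn_iff.1 huc η hη0
  obtain ⟨n, hn⟩ := exists_nat_one_div_lt hδ
  set N : ℕ := n + 1 with hN
  have hNpos : (0 : ℝ) < N := by positivity
  have hNδ : 1 / (N : ℝ) < δ := by rw [hN]; push_cast; exact hn
  have hmod : ∀ x ∈ Set.Icc (0 : ℝ) 1, ∀ y ∈ Set.Icc (0 : ℝ) 1, |x - y| ≤ 1 / N →
      |g x - g y| ≤ η := fun x hx y hy h =>
    (hδg x hx y hy (lt_of_le_of_lt h hNδ)).le
  have hiN : (0 : ℝ) < 1 / N := by positivity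
  obtain ⟨a, ha⟩ := eventually_atTop.1 (hσ1.eventually (Metric.ball_mem_nhds (1 : ℝ) hiN))
  obtain ⟨b, hb⟩ := eventually_atBot.1 (hσ0.eventually (Metric.ball_mem_nhds (0 : ℝ) hiN))
  set K : ℝ := max (max a (-b)) 0 with hK
  have hK0 : 0 ≤ K := le_max_right _ _
  have hKa : a ≤ K := le_trans (le_max_left _ _) (le_max_left _ _)
  have hKb : -b ≤ K := le_trans (le_max_right _ _) (le_max_left _ _)
  refine ⟨N, K, fun s hs => ?_⟩
  set j : ℕ := ⌊(N : ℝ) * s⌋₊ with hj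
  have hNs : 0 ≤ (N : ℝ) * s := mul_nonneg hNpos.le hs.1
  have hj1 : (j : ℝ) ≤ N * s := Nat.floor_le hNs
  have hj2 : (N : ℝ) * s < j + 1 := Nat.lt_floor_add_one _
  have hjN : j ≤ N := by
    have : (j : ℝ) ≤ N := hj1.trans (by nlinarith [hs.2])
    exact_mod_cast this
  have hpt : ∀ i : ℕ, i ≤ N → ((i : ℝ) / N) ∈ Set.Icc (0 : ℝ) 1 := fun i hi =>
    ⟨by positivity, by rw [div_le_one hNpos]; exact_mod_cast hi⟩
  have hD : ∀ i ∈ Finset.range N, |g (((i + 1 : ℕ) : ℝ) / N) - g ((i : ℝ) / N)| ≤ η := by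
    intro i hi
    have hi := Finset.mem_range.1 hi
    refine hmod _ (hpt _ hi) _ (hpt _ hi.le) ?_
    have e : ((Nat.succ i : ℕ) : ℝ) / N - (i : ℝ) / N = 1 / N := by
      rw [← sub_div, Nat.cast_succ, add_sub_cancel_left]
    rw [e, abs_of_pos hiN]
  have hstep : ∑ i ∈ Finset.range N, (g (((i + 1 : ℕ) : ℝ) / N) - g ((i : ℝ) / N)) *
      (if i < j then (1 : ℝ) else 0) = g ((j : ℝ) / N) - g 0 := by
    have h1 := Finset.sum_range_sub (fun i : ℕ => g ((i : ℝ) / N)) j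
    simp only [Nat.cast_zero, zero_div] at h1
    rw [← h1]
    simp only [mul_ite, mul_one, mul_zero]
    rw [← Finset.sum_filter]
    congr 1
    ext i
    simp only [Finset.mem_filter, Finset.mem_range]
    omega
  have hlast : |g ((j : ℝ) / N) - g s| ≤ η := by
    refine hmod _ (hpt _ hjN) _ hs ?_
    have : (j : ℝ) / N - s = (j - N * s) / N := by field_simp
    rw [this, abs_div, abs_of_pos hNpos]
    gcongr
    rw [abs_le]; constructor <;> linarith
  have hterm : ∀ i ∈ Finset.range N,
      |(g (((i + 1 : ℕ) : ℝ) / N) - g ((i : ℝ) / N)) *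
        (σ (K * (N * s - (i + 1))) - (if i < j then (1 : ℝ) else 0))| ≤
      η * (1 / N) + ((if i = j - 1 then η * (C + 1) else 0) +
        (if i = j then η * (C + 1) else 0)) := by
    intro i hi
    rw [abs_mul]
    have hp : 0 ≤ η * (C + 1) := by positivity
    have hq : 0 ≤ η * (1 / N) := by positivity
    have hA : 0 ≤ (if i = j - 1 then η * (C + 1) else 0) := by split_ifs <;> simp [hp]
    have hB : 0 ≤ (if i = j then η * (C + 1) else 0) := by split_ifs <;> simp [hp]
    have hcrude : |σ (K * (N * s - (i + 1))) - (if i < j then (1 : ℝ) else 0)| ≤ C + 1 := by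
      refine (abs_sub _ _).trans (add_le_add (hC _) ?_)
      split_ifs <;> simp
    have hcr := mul_le_mul (hD i hi) hcrude (abs_nonneg _) hη0.le
    by_cases h1 : i = j - 1
    · rw [if_pos h1]; linarith
    by_cases h2 : i = j
    · rw [if_pos h2]; linarith
    have hfine : |σ (K * (N * s - (i + 1))) - (if i < j then (1 : ℝ) else 0)| ≤ 1 / N := by
      by_cases h3 : i < j
      · rw [if_pos h3]
        have h4 : i + 2 ≤ j := by omega
        have h5 : (i : ℝ) + 2 ≤ j := by exact_mod_cast h4
        have := ha (K * (N * s - (i + 1))) (by nlinarith)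
        rw [Real.dist_eq] at this
        exact this.le
      · rw [if_neg h3]
        have h4 : j + 1 ≤ i := by omega
        have h5 : (j : ℝ) + 1 ≤ i := by exact_mod_cast h4
        have := hb (K * (N * s - (i + 1))) (by nlinarith)
        rw [Real.dist_eq] at this
        exact this.le
    have := mul_le_mul (hD i hi) hfine (abs_nonneg _) hη0.le
    linarith
  have hsum := (Finset.abs_sum_le_sum_abs _ _).trans (Finset.sum_le_sum hterm)
  have hbound : ∑ i ∈ Finset.range N, (η * (1 / N) + ((if i = j - 1 then η * (C + 1) else 0) +
        (if i = j then η * (C + 1) else 0))) ≤ η + (η * (C + 1) + η * (C + 1)) := by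
    rw [Finset.sum_add_distrib, Finset.sum_add_distrib, Finset.sum_ite_eq', Finset.sum_ite_eq',
      Finset.sum_const, Finset.card_range, nsmul_eq_mul]
    have hp : 0 ≤ η * (C + 1) := by positivity
    have e : (N : ℝ) * (η * (1 / N)) = η := by field_simp
    rw [e]
    gcongr <;> split_ifs <;> simp [hp]
  have htot := hsum.trans hbound
  simp only [mul_sub (_ - _) (σ _) _, Finset.sum_sub_distrib] at htot
  rw [hstep] at htot
  have hεη : ε = η + (η * (C + 1) + η * (C + 1)) + η := by
    rw [hη]; field_simp; ring
  rw [hεη]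
  refine le_trans (le_of_eq ?_) ((abs_add_le _ _).trans (add_le_add htot hlast))
  congr 1
  ring

lemma sov_exp_mem {X : Type*} [TopologicalSpace X] [CompactSpace X]
    (σ : ℝ → ℝ) (hσc : Continuous σ)
    (hσ1 : Tendsto σ atTop (nhds 1)) (hσ0 : Tendsto σ atBot (nhds 0))
    (V : Submodule ℝ C(X, ℝ)) (hV : IsClosed (V : Set C(X, ℝ))) (L : C(X, ℝ))
    (hmem : ∀ k b : ℝ, (⟨fun x => σ (k * L x + b), by fun_prop⟩ : C(X, ℝ)) ∈ V) :
    (⟨fun x => Real.exp (L x), by fun_prop⟩ : C(X, ℝ)) ∈ V := by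
  have hconst : ∀ c : ℝ, (ContinuousMap.const X c) ∈ V := by
    intro c
    obtain ⟨b, hb⟩ := (hσ1.eventually (lt_mem_nhds (show (1/2 : ℝ) < 1 by norm_num))).exists
    have hb0 : σ b ≠ 0 := by linarith
    have := V.smul_mem (c / σ b) (hmem 0 b)
    convert this using 1
    ext x
    simp [hb0]
  set M : ℝ := ‖L‖ + 1 with hM
  have hMpos : 0 < M := by positivity
  have hLM : ∀ x, |L x| ≤ M := fun x => (L.norm_coe_le_norm x).trans (by linarith)
  rw [← SetLike.mem_coe, ← hV.closure_eq, Metric.mem_closure_iff]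
  intro ε hε
  obtain ⟨N, K, h⟩ := sov_oneD σ hσc hσ1 hσ0 (fun s => Real.exp (M * (2 * s - 1))) (by fun_prop)
    (ε / 2) (by positivity)
  set g : ℝ → ℝ := fun s => Real.exp (M * (2 * s - 1)) with hg
  refine ⟨ContinuousMap.const X (g 0) + ∑ i ∈ Finset.range N,
    (g (((i + 1 : ℕ) : ℝ) / N) - g ((i : ℝ) / N)) •
      (⟨fun x => σ ((K * N / (2 * M)) * L x + (K * N / 2 - K * (i + 1))), by fun_prop⟩ : C(X, ℝ)),
    V.add_mem (hconst _) (V.sum_mem fun i _ => V.smul_mem _ (hmem _ _)), ?_⟩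
  refine lt_of_le_of_lt ?_ (half_lt_self hε)
  rw [ContinuousMap.dist_le (by positivity)]
  intro x
  have hx := abs_le.1 (hLM x)
  have := h ((L x + M) / (2 * M)) ⟨div_nonneg (by linarith) (by positivity), by
    rw [div_le_one (by positivity)]; linarith⟩
  rw [dist_comm, Real.dist_eq]
  convert this using 2
  simp only [ContinuousMap.add_apply, ContinuousMap.const_apply, ContinuousMap.sum_apply,
    ContinuousMap.smul_apply, ContinuousMap.coe_mk, smul_eq_mul]
  congr 1
  · congr 1
    refine Finset.sum_congr rfl fun i _ => ?_
    congr 2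
    field_simp
    ring
  · change Real.exp (L x) = Real.exp (M * (2 * ((L x + M) / (2 * M)) - 1))
    congr 1
    field_simp
    ring

/-- Density of separation-of-variables (SoV) space-time random-feature sums for a
continuous sigmoidal activation `σ` in `C(Ω × [0,T])` with the supremum norm. -/
theorem sov_dense {d : ℕ} (Ω : Set (Fin d → ℝ)) (hΩ : IsCompact Ω) (T : ℝ) (hT : 0 < T)
    (σ : ℝ → ℝ) (hσc : Continuous σ)
    (hσ1 : Tendsto σ atTop (nhds 1)) (hσ0 : Tendsto σ atBot (nhds 0))
    (f : ((Fin d → ℝ) × ℝ) → ℝ) (hf : ContinuousOn f (Ω ×ˢ Set.Icc 0 T))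
    (ε : ℝ) (hε : 0 < ε) :
    ∃ (N : ℕ) (u : Fin N → ℝ) (kx : Fin N → (Fin d → ℝ)) (kt : Fin N → ℝ)
      (bx : Fin N → ℝ) (bt : Fin N → ℝ),
      ∀ x ∈ Ω, ∀ t ∈ Set.Icc (0 : ℝ) T,
        |(∑ j, u j * (σ ((∑ i, kx j i * x i) + bx j) * σ (kt j * t + bt j))) - f (x, t)| < ε := by
  let X := ↥(Ω ×ˢ Set.Icc (0 : ℝ) T)
  have : CompactSpace X := isCompact_iff_compactSpace.1 (hΩ.prod isCompact_Icc)
  let Lx : (Fin d → ℝ) → C(X, ℝ) := fun a => ⟨fun p => ∑ i, a i * p.1.1 i, by fun_prop⟩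
  let Lt : ℝ → C(X, ℝ) := fun c => ⟨fun p => c * p.1.2, by fun_prop⟩
  let S : C(X, ℝ) → ℝ → ℝ → C(X, ℝ) := fun L k b => ⟨fun p => σ (k * L p + b), by fun_prop⟩
  let E : C(X, ℝ) → C(X, ℝ) := fun L => ⟨fun p => Real.exp (L p), by fun_prop⟩
  let Φ : (Fin d → ℝ) × ℝ × ℝ × ℝ → C(X, ℝ) := fun q =>
    S (Lx q.1) 1 q.2.2.1 * S (Lt q.2.1) 1 q.2.2.2
  let W : Submodule ℝ C(X, ℝ) := Submodule.span ℝ (Set.range Φ)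
  let V : Submodule ℝ C(X, ℝ) := W.topologicalClosure
  have hV : IsClosed (V : Set C(X, ℝ)) := W.isClosed_topologicalClosure
  have hSS : ∀ a c k b k' b', S (Lx a) k b * S (Lt c) k' b' ∈ V := by
    intro a c k b k' b'
    refine W.le_topologicalClosure (Submodule.subset_span ⟨(k • a, k' * c, b, b'), ?_⟩)
    ext p
    simp [Φ, S, Lx, Lt, Finset.mul_sum, mul_assoc]
  have hclosed : ∀ q : C(X, ℝ),
      IsClosed ((V.comap (LinearMap.mulLeft ℝ q) : Submodule ℝ C(X, ℝ)) : Set C(X, ℝ)) := by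
    intro q
    exact hV.preimage (continuous_const_mul q)
  have hSE : ∀ a c k b, S (Lx a) k b * E (Lt c) ∈ V := fun a c k b =>
    sov_exp_mem σ hσc hσ1 hσ0 (V.comap (LinearMap.mulLeft ℝ (S (Lx a) k b))) (hclosed _) (Lt c)
      (fun k' b' => hSS a c k b k' b')
  have hEE : ∀ a c, E (Lt c) * E (Lx a) ∈ V := fun a c =>
    sov_exp_mem σ hσc hσ1 hσ0 (V.comap (LinearMap.mulLeft ℝ (E (Lt c)))) (hclosed _) (Lx a)
      (fun k b => by
        have := hSE a c k b
        rw [mul_comm] at this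
        exact this)
  let Mon : Submonoid C(X, ℝ) :=
    { carrier := Set.range fun q : (Fin d → ℝ) × ℝ => E (Lt q.2) * E (Lx q.1)
      one_mem' := ⟨(0, 0), by ext p; simp [E, Lt, Lx]⟩
      mul_mem' := by
        rintro _ _ ⟨q, rfl⟩ ⟨r, rfl⟩
        refine ⟨q + r, ?_⟩
        ext p
        simp only [E, Lt, Lx, ContinuousMap.mul_apply, ContinuousMap.coe_mk, ← Real.exp_add,
          Prod.fst_add, Prod.snd_add, Pi.add_apply, add_mul, Finset.sum_add_distrib]
        congr 1
        ring }
  let A : Subalgebra ℝ C(X, ℝ) := Algebra.adjoin ℝ (Mon : Set C(X, ℝ))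
  have hAV : ∀ q ∈ A, q ∈ V := by
    intro q hq
    have hq' : q ∈ Subalgebra.toSubmodule A := hq
    rw [Algebra.adjoin_eq_span, Submonoid.closure_eq] at hq'
    refine Submodule.span_le.2 ?_ hq'
    rintro _ ⟨r, rfl⟩
    exact hEE r.1 r.2
  have hsep : A.SeparatesPoints := by
    intro p q hpq
    by_cases ht : p.1.2 = q.1.2
    · have : p.1.1 ≠ q.1.1 := fun h => hpq (Subtype.ext (Prod.ext h ht))
      obtain ⟨i, hi⟩ := Function.ne_iff.1 this
      refine ⟨_, ⟨_, Algebra.subset_adjoin ⟨(Pi.single i 1, 0), rfl⟩, rfl⟩, ?_⟩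
      simpa [E, Lt, Lx, Pi.single_apply] using hi
    · refine ⟨_, ⟨_, Algebra.subset_adjoin ⟨(0, 1), rfl⟩, rfl⟩, ?_⟩
      simpa [E, Lt, Lx] using ht
  have htop := ContinuousMap.subalgebra_topologicalClosure_eq_top_of_separatesPoints A hsep
  let F : C(X, ℝ) := ⟨fun p => f p.1, continuousOn_iff_continuous_domRestrict.1 hf⟩
  have hFV : F ∈ V := by
    have h1 : F ∈ A.topologicalClosure := by rw [htop]; trivial
    have h2 : F ∈ closure (A : Set C(X, ℝ)) := h1
    exact closure_minimal (fun q hq => hAV q hq) hV h2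
  have hFc : F ∈ closure (W : Set C(X, ℝ)) := hFV
  obtain ⟨q, hq, hdist⟩ := Metric.mem_closure_iff.1 hFc ε hε
  obtain ⟨N, u, r, hr⟩ := Submodule.mem_span_set'.1 hq
  choose par hpar using fun j => (r j).2
  refine ⟨N, u, fun j => (par j).1, fun j => (par j).2.1, fun j => (par j).2.2.1,
    fun j => (par j).2.2.2, fun x hx t ht => ?_⟩
  have h := lt_of_le_of_lt (ContinuousMap.dist_apply_le_dist (f := F) (g := q) ⟨(x, t), hx, ht⟩) hdist
  rw [dist_comm, Real.dist_eq, ← hr] at h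
  simp only [← hpar] at h
  have hF : F ⟨(x, t), hx, ht⟩ = f (x, t) := rfl
  rw [hF] at h
  simpa [Φ, S, Lx, Lt] using h
end

section
/- Let Ω ⊂ ℝ^d be a compact set and T > 0. The set of finite sums of separated (product) form G(x,t) = Σ_{j=1}^N u_j tanh(⟨k_j^x, x⟩ + b_j^x) tanh(k_j^t t + b_j^t), with N ∈ ℕ, u_j, k_j^t, b_j^x, b_j^t ∈ ℝ and k_j^x ∈ ℝ^d, is dense in C(Ω × [0,T]) with respect to the supremum norm. -/
lemma aux_bound (y b : ℝ) :
    |(1 / 2 * Real.exp (2 * b)) * (1 - Real.tanh (y + b)) - Real.exp (-2 * y)|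
      ≤ Real.exp (-2 * b) * Real.exp (-4 * y) := by
  have hp := Real.exp_pos y
  have hq := Real.exp_pos b
  have e1 : Real.exp (2 * b) = Real.exp b ^ 2 := by rw [← Real.exp_nat_mul]; norm_num
  have e2 : Real.exp (-2 * y) = (Real.exp y ^ 2)⁻¹ := by
    rw [← Real.exp_nat_mul, ← Real.exp_neg]; congr 1; push_cast; ring
  have e3 : Real.exp (-2 * b) = (Real.exp b ^ 2)⁻¹ := by
    rw [← Real.exp_nat_mul, ← Real.exp_neg]; congr 1; push_cast; ring
  have e4 : Real.exp (-4 * y) = (Real.exp y ^ 4)⁻¹ := by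
    rw [← Real.exp_nat_mul, ← Real.exp_neg]; congr 1; push_cast; ring
  rw [Real.tanh_eq_sinh_div_cosh, Real.sinh_eq, Real.cosh_eq, Real.exp_neg, Real.exp_add, e1, e2,
    e3, e4]
  set p := Real.exp y
  set q := Real.exp b
  have : 1 / 2 * q ^ 2 * (1 - (p * q - (p * q)⁻¹) / 2 / ((p * q + (p * q)⁻¹) / 2)) - (p ^ 2)⁻¹
      = - (1 / (p ^ 2 * (p ^ 2 * q ^ 2 + 1))) := by
    field_simp
    ring
  rw [this, abs_neg, abs_of_pos (by positivity), ← mul_inv, ← one_div]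
  apply one_div_le_one_div_of_le (by positivity)
  nlinarith [sq_nonneg p]

lemma tanh_cont : Continuous Real.tanh := by
  have : Real.tanh = fun x => Real.sinh x / Real.cosh x := by
    funext x; exact Real.tanh_eq_sinh_div_cosh x
  rw [this]
  exact Real.continuous_sinh.div Real.continuous_cosh (fun x => (Real.cosh_pos x).ne')

/-- `tanh (φ + b)` as a continuous map -/
noncomputable def thC {X : Type*} [TopologicalSpace X] (φ : C(X, ℝ)) (b : ℝ) : C(X, ℝ) :=
  ⟨fun x => Real.tanh (φ x + b), tanh_cont.comp (by fun_prop)⟩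

/-- `exp (c * φ)` as a continuous map -/
noncomputable def exC {X : Type*} [TopologicalSpace X] (c : ℝ) (φ : C(X, ℝ)) : C(X, ℝ) :=
  ⟨fun x => Real.exp (c * φ x), by fun_prop⟩

lemma key {X : Type*} [TopologicalSpace X] [CompactSpace X] (W : Submodule ℝ C(X, ℝ))
    (hW : IsClosed (W : Set C(X, ℝ))) (φ H : C(X, ℝ)) (h0 : H ∈ W)
    (hA : ∀ b, H * thC φ b ∈ W) : H * exC (-2) φ ∈ W := by
  have lim : Filter.Tendsto (fun b : ℝ => (1 / 2 * Real.exp (2 * b)) • (1 - thC φ b))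
      Filter.atTop (nhds (exC (-2) φ)) := by
    rw [tendsto_iff_norm_sub_tendsto_zero]
    have h1 : Filter.Tendsto (fun b : ℝ => Real.exp (-2 * b) * ‖exC (-4) φ‖)
        Filter.atTop (nhds 0) := by
      rw [← zero_mul ‖exC (-4) φ‖]
      apply Filter.Tendsto.mul_const
      apply Real.tendsto_exp_atBot.comp
      exact Filter.tendsto_id.const_mul_atTop_of_neg (by norm_num)
    refine squeeze_zero (fun _ => norm_nonneg _) (fun b => ?_) h1
    rw [ContinuousMap.norm_le _ (by positivity)]
    intro x
    have h2 := aux_bound (φ x) b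
    have h3 := (exC (-4) φ).norm_coe_le_norm x
    have h4 : Real.exp (-4 * φ x) ≤ ‖exC (-4) φ‖ := (le_abs_self _).trans h3
    exact h2.trans (mul_le_mul_of_nonneg_left h4 (Real.exp_pos _).le)
  refine hW.mem_of_tendsto (lim.const_mul H) (Filter.Eventually.of_forall fun b => ?_)
  have : H * ((1 / 2 * Real.exp (2 * b)) • (1 - thC φ b))
      = (1 / 2 * Real.exp (2 * b)) • (H - H * thC φ b) := by
    rw [mul_smul_comm, mul_sub, mul_one]
  change H * ((1 / 2 * Real.exp (2 * b)) • (1 - thC φ b)) ∈ W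
  rw [this]
  exact W.smul_mem _ (W.sub_mem h0 (hA b))

lemma tanh_one_ne : Real.tanh 1 ≠ 0 := by
  rw [Real.tanh_eq_sinh_div_cosh]
  exact div_ne_zero (Real.sinh_pos_iff.2 one_pos).ne' (Real.cosh_pos 1).ne'

/-- Abstract density: `L`, `M` linear families of continuous functions jointly separating. -/
lemma dense_abs {X A B : Type*} [TopologicalSpace X] [CompactSpace X]
    [AddCommGroup A] [Module ℝ A] [AddCommGroup B] [Module ℝ B]
    (L : A →ₗ[ℝ] C(X, ℝ)) (M : B →ₗ[ℝ] C(X, ℝ))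
    (sep : ∀ x y : X, (∀ a, L a x = L a y) → (∀ b, M b x = M b y) → x = y) :
    (Submodule.span ℝ (Set.range fun p : (A × ℝ) × (B × ℝ) =>
      thC (L p.1.1) p.1.2 * thC (M p.2.1) p.2.2)).topologicalClosure = ⊤ := by
  set W := (Submodule.span ℝ (Set.range fun p : (A × ℝ) × (B × ℝ) =>
      thC (L p.1.1) p.1.2 * thC (M p.2.1) p.2.2)).topologicalClosure with hWdef
  have hW : IsClosed (W : Set C(X, ℝ)) := Submodule.isClosed_topologicalClosure _
  have hG : ∀ a s b t, thC (L a) s * thC (M b) t ∈ W := fun a s b t =>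
    Submodule.le_topologicalClosure _ (Submodule.subset_span ⟨((a, s), (b, t)), rfl⟩)
  have hL0 : ∀ H : C(X, ℝ), thC (L 0) 1 * H = Real.tanh 1 • H := by
    intro H; ext x; simp [thC]
  have hM0 : ∀ H : C(X, ℝ), H * thC (M 0) 1 = Real.tanh 1 • H := by
    intro H; ext x; simp [thC, mul_comm]
  have h1 : ∀ a b t, thC (M b) t * exC (-2) (L a) ∈ W := by
    intro a b t
    refine key W hW _ _ ?_ ?_
    · have := hG 0 1 b t
      rw [hL0] at this
      exact (W.smul_mem_iff tanh_one_ne).1 this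
    · intro s; rw [mul_comm]; exact hG a s b t
  have h2 : ∀ a b, exC (-2) (L a) * exC (-2) (M b) ∈ W := by
    intro a b
    refine key W hW _ _ ?_ ?_
    · have := h1 a 0 1
      rw [mul_comm, hM0] at this
      exact (W.smul_mem_iff tanh_one_ne).1 this
    · intro s; rw [mul_comm]; exact h1 a b s
  let S : Submonoid C(X, ℝ) :=
    { carrier := Set.range fun p : A × B => exC (-2) (L p.1) * exC (-2) (M p.2)
      one_mem' := ⟨0, by ext x; simp [exC]⟩
      mul_mem' := by
        rintro _ _ ⟨p, rfl⟩ ⟨q, rfl⟩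
        refine ⟨p + q, ?_⟩
        ext x
        simp only [exC, Prod.fst_add, Prod.snd_add, map_add, ContinuousMap.mul_apply,
          ContinuousMap.coe_mk, ContinuousMap.add_apply, mul_add, Real.exp_add]
        ring }
  have hS : ∀ a b, exC (-2) (L a) * exC (-2) (M b) ∈ S := fun a b => ⟨(a, b), rfl⟩
  have hsub : (Algebra.adjoin ℝ (S : Set C(X, ℝ))).toSubmodule ≤ W := by
    rw [Algebra.adjoin_eq_span, Submonoid.closure_eq, Submodule.span_le]
    rintro _ ⟨p, rfl⟩
    exact h2 _ _
  have hsep : (Algebra.adjoin ℝ (S : Set C(X, ℝ))).SeparatesPoints := by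
    intro x y hxy
    by_contra hcon
    push Not at hcon
    have hall : ∀ a b, (exC (-2) (L a) * exC (-2) (M b)) x
        = (exC (-2) (L a) * exC (-2) (M b)) y := fun a b =>
      hcon _ ⟨_, Algebra.subset_adjoin (hS a b), rfl⟩
    refine hxy (sep x y (fun a => ?_) (fun b => ?_))
    · simpa [exC] using hall a 0
    · simpa [exC] using hall 0 b
  have htop := ContinuousMap.subalgebra_topologicalClosure_eq_top_of_separatesPoints _ hsep
  rw [eq_top_iff]
  intro f _
  have hf : f ∈ (Algebra.adjoin ℝ (S : Set C(X, ℝ))).topologicalClosure := by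
    rw [htop]; trivial
  exact closure_minimal (fun g hg => hsub hg) hW hf

/-- Density of separation-of-variables (SoV) space-time random-feature sums with
the `tanh` activation in `C(Ω × [0,T])` with the supremum norm. -/
theorem sov_tanh_dense {d : ℕ} (Ω : Set (Fin d → ℝ)) (hΩ : IsCompact Ω) (T : ℝ) (hT : 0 < T)
    (f : ((Fin d → ℝ) × ℝ) → ℝ) (hf : ContinuousOn f (Ω ×ˢ Set.Icc 0 T))
    (ε : ℝ) (hε : 0 < ε) :
    ∃ (N : ℕ) (u : Fin N → ℝ) (kx : Fin N → (Fin d → ℝ)) (kt : Fin N → ℝ)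
      (bx : Fin N → ℝ) (bt : Fin N → ℝ),
      ∀ x ∈ Ω, ∀ t ∈ Set.Icc (0 : ℝ) T,
        |(∑ j, u j * (Real.tanh ((∑ i, kx j i * x i) + bx j) * Real.tanh (kt j * t + bt j)))
          - f (x, t)| < ε := by
  let X := ↥(Ω ×ˢ Set.Icc (0 : ℝ) T)
  haveI : CompactSpace X := isCompact_iff_compactSpace.1 (hΩ.prod isCompact_Icc)
  let L : (Fin d → ℝ) →ₗ[ℝ] C(X, ℝ) :=
    { toFun := fun k => ⟨fun p => ∑ i, k i * p.1.1 i, by fun_prop⟩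
      map_add' := by intro a b; ext p; simp [add_mul, Finset.sum_add_distrib]
      map_smul' := by intro a b; ext p; simp [mul_assoc, Finset.mul_sum] }
  let M : ℝ →ₗ[ℝ] C(X, ℝ) :=
    { toFun := fun k => ⟨fun p => k * p.1.2, by fun_prop⟩
      map_add' := by intro a b; ext p; simp [add_mul]
      map_smul' := by intro a b; ext p; simp [mul_assoc] }
  have hd := dense_abs L M (by
    intro x y h1 h2
    apply Subtype.ext
    apply Prod.ext
    · funext i
      simpa [L, Pi.single_apply] using h1 (Pi.single i 1)
    · simpa [M] using h2 1)
  let F : C(X, ℝ) := ⟨fun p => f p.1, continuousOn_iff_continuous_restrict.1 hf⟩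
  have hF := (Submodule.eq_top_iff'.1 hd) F
  obtain ⟨g, hg, hgd⟩ := Metric.mem_closure_iff.1 hF ε hε
  obtain ⟨N, u, v, rfl⟩ := Submodule.mem_span_set'.1 hg
  choose q hq using fun j => (v j).2
  refine ⟨N, u, fun j => (q j).1.1, fun j => (q j).2.1, fun j => (q j).1.2, fun j => (q j).2.2, ?_⟩
  intro x hx t ht
  have h1 := (ContinuousMap.dist_lt_iff hε).1 hgd ⟨(x, t), hx, ht⟩
  rw [dist_comm, Real.dist_eq] at h1
  convert h1 using 3
  simp only [← hq, ContinuousMap.coe_sum, ContinuousMap.coe_smul, Finset.sum_apply, Pi.smul_apply,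
    smul_eq_mul, ContinuousMap.mul_apply]
  rfl
  rfl
end

section
/- Let σ : ℝ → ℝ be a bounded measurable sigmoidal function, let k ∈ ℝ^m, and let b, θ ∈ ℝ. Then as λ → +∞, the functions x ↦ σ(λ(⟨k, x⟩ + b) + θ) converge pointwise and boundedly on ℝ^m to the function γ given by γ(x) = 1 if ⟨k, x⟩ + b > 0, γ(x) = 0 if ⟨k, x⟩ + b < 0, and γ(x) = σ(θ) if ⟨k, x⟩ + b = 0; moreover, for every finite signed Borel measure μ on a compact set K ⊂ ℝ^m, ∫_K σ(λ(⟨k,x⟩ + b) + θ) dμ(x) → ∫_K γ(x) dμ(x) as λ → +∞. -/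
open Filter MeasureTheory

/-- Bounded pointwise convergence of scaled sigmoidal functions, and the resulting
convergence of integrals against finite signed Borel measures.  For a bounded
measurable sigmoidal `σ`, as `λ → +∞` the functions `x ↦ σ(λ(⟨k,x⟩ + b) + θ)`
converge pointwise to the limit `γ` (equal to `1`, `0`, or `σ(θ)` according to the
sign of `⟨k,x⟩ + b`), they are uniformly bounded, and for every finite signed Borel
measure `μ = μ₁ - μ₂` (Jordan decomposition into two finite measures) on a compact
set `K ⊆ ℝ^m`, the corresponding integrals converge to the integral of `γ`. -/
theorem sigmoidal_bounded_pointwise_limit (m : ℕ) (σ : ℝ → ℝ)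
    (hσm : Measurable σ) (hσb : ∃ C, ∀ z, |σ z| ≤ C)
    (hσ1 : Tendsto σ atTop (nhds 1)) (hσ0 : Tendsto σ atBot (nhds 0))
    (k : Fin m → ℝ) (b θ : ℝ) :
    (∀ x : Fin m → ℝ,
      Tendsto (fun lam : ℝ => σ (lam * ((∑ i, k i * x i) + b) + θ)) atTop
        (nhds (if 0 < (∑ i, k i * x i) + b then (1 : ℝ)
          else if (∑ i, k i * x i) + b < 0 then 0 else σ θ))) ∧
    (∃ C : ℝ, ∀ (lam : ℝ) (x : Fin m → ℝ), |σ (lam * ((∑ i, k i * x i) + b) + θ)| ≤ C) ∧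
    (∀ (K : Set (Fin m → ℝ)), IsCompact K →
      ∀ (μ₁ μ₂ : Measure (Fin m → ℝ)), IsFiniteMeasure μ₁ → IsFiniteMeasure μ₂ →
        Tendsto (fun lam : ℝ =>
            (∫ x in K, σ (lam * ((∑ i, k i * x i) + b) + θ) ∂μ₁) -
            ∫ x in K, σ (lam * ((∑ i, k i * x i) + b) + θ) ∂μ₂) atTop
          (nhds ((∫ x in K, (if 0 < (∑ i, k i * x i) + b then (1 : ℝ)
              else if (∑ i, k i * x i) + b < 0 then 0 else σ θ) ∂μ₁) -
            ∫ x in K, (if 0 < (∑ i, k i * x i) + b then (1 : ℝ)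
              else if (∑ i, k i * x i) + b < 0 then 0 else σ θ) ∂μ₂))) := by
  have hpt : ∀ x : Fin m → ℝ,
      Tendsto (fun lam : ℝ => σ (lam * ((∑ i, k i * x i) + b) + θ)) atTop
        (nhds (if 0 < (∑ i, k i * x i) + b then (1 : ℝ)
          else if (∑ i, k i * x i) + b < 0 then 0 else σ θ)) := by
    intro x
    generalize (∑ i, k i * x i) + b = t
    split_ifs with h1 h2
    · exact hσ1.comp (tendsto_atTop_add_const_right _ _ (tendsto_id.atTop_mul_const h1))
    · exact hσ0.comp (tendsto_atBot_add_const_right _ _ (tendsto_id.atTop_mul_const_of_neg h2))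
    · have ht : t = 0 := le_antisymm (not_lt.mp h1) (not_lt.mp h2)
      subst ht
      simp
  obtain ⟨C, hC⟩ := hσb
  refine ⟨hpt, ⟨C, fun lam x => hC _⟩, ?_⟩
  intro K _ μ₁ μ₂ h₁ h₂
  have key : ∀ μ : Measure (Fin m → ℝ), IsFiniteMeasure μ →
      Tendsto (fun lam : ℝ => ∫ x in K, σ (lam * ((∑ i, k i * x i) + b) + θ) ∂μ) atTop
        (nhds (∫ x in K, (if 0 < (∑ i, k i * x i) + b then (1 : ℝ)
              else if (∑ i, k i * x i) + b < 0 then 0 else σ θ) ∂μ)) := by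
    intro μ hμ
    refine tendsto_integral_filter_of_dominated_convergence (fun _ => C) ?_ ?_
      (integrable_const C) ?_
    · refine Eventually.of_forall fun lam => ?_
      have hm : Measurable fun x : Fin m → ℝ => σ (lam * ((∑ i, k i * x i) + b) + θ) :=
        hσm.comp (by fun_prop)
      exact hm.aestronglyMeasurable
    · exact Eventually.of_forall fun lam => Eventually.of_forall fun x => hC _
    · exact Eventually.of_forall hpt
  exact (key μ₁ h₁).sub (key μ₂ h₂)
end
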